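/- For all integers n ≥ 0 and all 0 ≤ j ≤ i ≤ n, the number of pairs (c, E), where c : Fin n → Bool is a choice with exactly i indices k satisfying c k = false and E is a noncrossing contraction with exactly j edges of the word of (a + (a†)²)^n associated to c, satisfies (n+1) · #{such pairs} = C(n+1, j+1) · C(n−j, n−i) · C(2(n−i), j), where C denotes the binomial coefficient. -/

import Mathlib

/-- Two edges `(i,j)` and `(p,q)` cross if `i < p < j < q` or `p < i < q < j`. -/
def Crosses {N : ℕ} (e f : Fin N × Fin N) : Prop :=
  (e.1 < f.1 ∧ f.1 < e.2 ∧ e.2 < f.2) ∨ (f.1 < e.1 ∧ e.1 < f.2 ∧ f.2 < e.2)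

/-- A contraction of the word `w`: a set of edges `(i,j)` with `i < j`, `w i = false` (an `a`),
`w j = true` (an `a†`), whose endpoints are pairwise distinct. -/
def IsContraction {N : ℕ} (w : Fin N → Bool) (E : Finset (Fin N × Fin N)) : Prop :=
  (∀ e ∈ E, e.1 < e.2 ∧ w e.1 = false ∧ w e.2 = true) ∧
  (∀ e ∈ E, ∀ f ∈ E, e ≠ f → e.1 ≠ f.1 ∧ e.1 ≠ f.2 ∧ e.2 ≠ f.1 ∧ e.2 ≠ f.2)

/-- A set of edges is noncrossing if no two of its edges cross. -/
def IsNoncrossing {N : ℕ} (E : Finset (Fin N × Fin N)) : Prop :=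
  ∀ e ∈ E, ∀ f ∈ E, ¬ Crosses e f

/-- The number of noncrossing contractions of `w` with exactly `m` edges. -/
noncomputable def ncCount {N : ℕ} (w : Fin N → Bool) (m : ℕ) : ℕ :=
  Nat.card {E : Finset (Fin N × Fin N) //
    IsContraction w E ∧ IsNoncrossing E ∧ E.card = m}

/-- The word of `(a + (a†)^s)^n` associated to a choice `c : Fin n → Bool`: block `k` consists of
the single letter `a` (`false`) if `c k = false`, and of `s` copies of `a†` (`true`) otherwise. -/
def wordChoiceAS (s : ℕ) {n : ℕ} (c : Fin n → Bool) : List Bool :=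
  (List.ofFn c).flatMap (fun b => if b then List.replicate s true else [false])

/-- The number of pairs `(c, E)` where `c` is a choice for `(a + (a†)^s)^n` with exactly `i`
indices `k` satisfying `c k = false`, and `E` is a noncrossing contraction of the associated
word with exactly `j` edges. -/
noncomputable def pairCountAS (s n j i : ℕ) : ℕ :=
  Nat.card {p : Σ c : Fin n → Bool,
      Finset (Fin (wordChoiceAS s c).length × Fin (wordChoiceAS s c).length) //
    (Finset.univ.filter (fun k => p.1 k = false)).card = i ∧
    IsContraction (wordChoiceAS s p.1).get p.2 ∧ IsNoncrossing p.2 ∧ p.2.card = j}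

/-!
Read the word from left to right. A noncrossing contraction arises by deciding at each `a` whether
it is kept open for a later partner, and at each `a†` whether it is matched; a matched `a†` has to
take the last open `a`, since otherwise that letter would be covered by the new edge. So only the
number `h` of open letters matters. A block `(a†)^s` that closes `k` letters does so in `C(s, k)`
ways, and the resulting recursion in `n` has the ballot-type solution
`(h + 1) / (n + 1) * (n + 1)! / (b! (j + h + 1)! (n - b - j - h)!) * C(s * b, j)`
for `b` blocks `(a†)^s`, `j` edges and `h` letters left open. The step for a block `(a†)^s` is
Vandermonde's convolution, weighted by the number of letters that are open before the block.
-/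

section Trinomial

open Finset

/-- The trinomial coefficient `n! / (b! m! (n - b - m)!)`, zero if `n < b + m`. -/
def trinomial (n b m : ℕ) : ℕ :=
  n.choose (b + m) * (b + m).choose b

theorem trinomial_comm (n b m : ℕ) : trinomial n b m = trinomial n m b := by
  rw [trinomial, trinomial, add_comm b m, Nat.choose_symm_add]

theorem trinomial_eq_choose_mul_choose_sub (n b m : ℕ) :
    trinomial n b m = n.choose m * (n - m).choose b := by
  rw [trinomial_comm, trinomial, Nat.choose_mul (Nat.le_add_right ..), Nat.add_sub_cancel_left]

theorem add_one_mul_trinomial_left (n b m : ℕ) :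
    (n + 1) * trinomial n b m = (b + 1) * trinomial (n + 1) (b + 1) m := by
  have h1 := Nat.add_one_mul_choose_eq n (b + m)
  have h2 := Nat.add_one_mul_choose_eq (b + m) b
  rw [trinomial, trinomial, Nat.add_right_comm b 1 m]
  linear_combination (b + m).choose b * h1 + (n + 1).choose (b + m + 1) * h2

theorem add_one_mul_trinomial_right (n b m : ℕ) :
    (n + 1) * trinomial n b m = (m + 1) * trinomial (n + 1) b (m + 1) := by
  rw [trinomial_comm n, trinomial_comm (n + 1), add_one_mul_trinomial_left]

theorem add_one_mul_choose_add_mul_choose_succ (n k : ℕ) :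
    (n + 1) * n.choose k + k * (n + 1).choose k = (n + 1) * (n + 1).choose k := by
  cases k with
  | zero => simp
  | succ k =>
    linear_combination (Nat.add_one_mul_choose_eq n k).symm -
      (n + 1) * Nat.choose_succ_succ' n k

theorem add_one_mul_trinomial_add (n b m : ℕ) :
    (n + 1) * trinomial n b m + (b + m) * trinomial (n + 1) b m =
      (n + 1) * trinomial (n + 1) b m := by
  unfold trinomial
  linear_combination (b + m).choose b * add_one_mul_choose_add_mul_choose_succ n (b + m)

theorem add_mul_sum_fst_mul_choose_mul_choose (m n k : ℕ) :
    (m + n) * ∑ p ∈ antidiagonal k, p.1 * (m.choose p.1 * n.choose p.2) =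
      m * k * (m + n).choose k := by
  rcases m with _ | m
  · suffices ∑ p ∈ antidiagonal k, p.1 * ((0 : ℕ).choose p.1 * n.choose p.2) = 0 by simp [this]
    refine sum_eq_zero fun p _ => ?_
    rcases p with ⟨_ | _, _⟩ <;> simp
  rcases k with _ | k
  · simp
  have absorb (p : ℕ × ℕ) : (p.1 + 1) * ((m + 1).choose (p.1 + 1) * n.choose p.2) =
      (m + 1) * (m.choose p.1 * n.choose p.2) := by
    linear_combination n.choose p.2 * (Nat.add_one_mul_choose_eq m p.1).symm
  rw [Nat.sum_antidiagonal_succ, zero_mul, zero_add]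
  simp only [absorb]
  rw [← mul_sum, ← Nat.add_choose_eq, Nat.add_right_comm]
  linear_combination (m + 1) * Nat.add_one_mul_choose_eq (m + n) k

theorem add_one_mul_sum_weighted_choose_mul_choose (s b j h : ℕ) :
    (b + 1) * ∑ p ∈ antidiagonal j, s.choose p.1 * ((h + p.1 + 1) * (s * b).choose p.2) =
      ((b + 1) * (h + 1) + j) * (s * (b + 1)).choose j := by
  rcases s.eq_zero_or_pos with rfl | hs
  · rcases j with _ | j <;> simp [Nat.sum_antidiagonal_succ]
  have hmul : s + s * b = s * (b + 1) := by ring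
  have hweighted : (b + 1) * ∑ p ∈ antidiagonal j, p.1 * (s.choose p.1 * (s * b).choose p.2) =
      j * (s * (b + 1)).choose j := by
    refine Nat.eq_of_mul_eq_mul_left hs ?_
    have h := add_mul_sum_fst_mul_choose_mul_choose s (s * b) j
    rw [hmul] at h
    rw [← mul_assoc, h, mul_assoc]
  have hvandermonde : ∑ p ∈ antidiagonal j, s.choose p.1 * (s * b).choose p.2 =
      (s * (b + 1)).choose j := by
    rw [← Nat.add_choose_eq, hmul]
  have hsplit : ∀ p : ℕ × ℕ, s.choose p.1 * ((h + p.1 + 1) * (s * b).choose p.2) =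
      (h + 1) * (s.choose p.1 * (s * b).choose p.2) +
        p.1 * (s.choose p.1 * (s * b).choose p.2) := fun p => by ring
  simp only [hsplit, sum_add_distrib, ← mul_sum]
  rw [hvandermonde]
  linear_combination hweighted

end Trinomial

section OpenContraction

open Finset

/-- A noncrossing contraction `E` of the word `w` together with a set `S` of open letters: letters
`a` that no edge of `E` meets or covers, so that they can still be matched with an `a†` to the right
of `w`. Positions are natural numbers, so that they do not change when `w` is extended. -/
structure IsOpenContraction (w : List Bool) (E : Finset (ℕ × ℕ)) (S : Finset ℕ) : Prop where
  lt : ∀ e ∈ E, e.1 < e.2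
  fst : ∀ e ∈ E, w[e.1]? = some false
  snd : ∀ e ∈ E, w[e.2]? = some true
  disjoint : ∀ e ∈ E, ∀ f ∈ E, e ≠ f → e.1 ≠ f.1 ∧ e.2 ≠ f.2
  noncrossing : ∀ e ∈ E, ∀ f ∈ E, ¬ (e.1 < f.1 ∧ f.1 < e.2 ∧ e.2 < f.2)
  isOpen : ∀ s ∈ S, w[s]? = some false
  uncovered : ∀ s ∈ S, ∀ e ∈ E, s < e.1 ∨ e.2 < s

/-- The open contractions of `w` with `j` edges and `h` open letters. -/
def openContractions (w : List Bool) (j h : ℕ) : Set (Finset (ℕ × ℕ) × Finset ℕ) :=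
  {x | IsOpenContraction w x.1 x.2 ∧ x.1.card = j ∧ x.2.card = h}

/-- The number of open contractions of `w` with `j` edges and `h` open letters; for `h = 0` these
are the noncrossing contractions with `j` edges. -/
noncomputable def openCount (w : List Bool) (j h : ℕ) : ℕ :=
  (openContractions w j h).ncard

/-- Adds the letter that follows the word `w` to the open letters. -/
def openNext (w : List Bool) (x : Finset (ℕ × ℕ) × Finset ℕ) : Finset (ℕ × ℕ) × Finset ℕ :=
  (x.1, insert w.length x.2)

/-- Matches the letter that follows the word `w` with the last open letter. The supremum is the
maximum of the set of open letters if this is nonempty. -/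
def closeLast (w : List Bool) (x : Finset (ℕ × ℕ) × Finset ℕ) : Finset (ℕ × ℕ) × Finset ℕ :=
  (insert (x.2.sup id, w.length) x.1, x.2.erase (x.2.sup id))

theorem sup_id_mem {α : Type*} [LinearOrder α] [OrderBot α] {S : Finset α} (hS : S.Nonempty) :
    S.sup id ∈ S := by
  simpa using sup_mem_of_nonempty (f := id) hS

theorem getElem?_append_singleton_eq_some_iff {α : Type*} {l : List α} {x y : α} {i : ℕ} :
    (l ++ [x])[i]? = some y ↔ l[i]? = some y ∨ i = l.length ∧ y = x := by
  grind

namespace IsOpenContraction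

variable {w : List Bool} {E : Finset (ℕ × ℕ)} {S : Finset ℕ}

theorem fst_lt_length (H : IsOpenContraction w E S) {e : ℕ × ℕ} (he : e ∈ E) : e.1 < w.length :=
  (List.getElem?_eq_some_iff.1 (H.fst e he)).1

theorem snd_lt_length (H : IsOpenContraction w E S) {e : ℕ × ℕ} (he : e ∈ E) : e.2 < w.length :=
  (List.getElem?_eq_some_iff.1 (H.snd e he)).1

theorem lt_length (H : IsOpenContraction w E S) {s : ℕ} (hs : s ∈ S) : s < w.length :=
  (List.getElem?_eq_some_iff.1 (H.isOpen s hs)).1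

theorem length_notMem (H : IsOpenContraction w E S) : w.length ∉ S :=
  fun h => (H.lt_length h).false

theorem mono {E' : Finset (ℕ × ℕ)} {S' : Finset ℕ} (H : IsOpenContraction w E S) (hE : E' ⊆ E)
    (hS : S' ⊆ S) : IsOpenContraction w E' S' where
  lt e he := H.lt e (hE he)
  fst e he := H.fst e (hE he)
  snd e he := H.snd e (hE he)
  disjoint e he f hf := H.disjoint e (hE he) f (hE hf)
  noncrossing e he f hf := H.noncrossing e (hE he) f (hE hf)
  isOpen s hs := H.isOpen s (hS hs)
  uncovered s hs e he := H.uncovered s (hS hs) e (hE he)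

theorem append_singleton_iff {x : Bool} (hE : ∀ e ∈ E, e.2 ≠ w.length) (hS : w.length ∉ S) :
    IsOpenContraction (w ++ [x]) E S ↔ IsOpenContraction w E S := by
  constructor <;> intro H
  · have old {i : ℕ} {y : Bool} (hi : i ≠ w.length) (h : (w ++ [x])[i]? = some y) :
        w[i]? = some y :=
      (getElem?_append_singleton_eq_some_iff.1 h).resolve_right fun h' => hi h'.1
    refine { H with fst := ?_, snd := ?_, isOpen := ?_ }
    · intro e he
      have hlt := H.lt e he
      have hlen := H.snd_lt_length he
      rw [List.length_append, List.length_singleton] at hlen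
      exact old (by omega) (H.fst e he)
    · exact fun e he => old (hE e he) (H.snd e he)
    · exact fun s hs => old (ne_of_mem_of_not_mem hs hS) (H.isOpen s hs)
  · exact { H with
      fst e he := getElem?_append_singleton_eq_some_iff.2 (.inl (H.fst e he))
      snd e he := getElem?_append_singleton_eq_some_iff.2 (.inl (H.snd e he))
      isOpen s hs := getElem?_append_singleton_eq_some_iff.2 (.inl (H.isOpen s hs)) }

theorem append_singleton (H : IsOpenContraction w E S) (x : Bool) :
    IsOpenContraction (w ++ [x]) E S :=
  (append_singleton_iff (fun _ he => (H.snd_lt_length he).ne) H.length_notMem).2 H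

theorem snd_ne_length_of_append_false (H : IsOpenContraction (w ++ [false]) E S) :
    ∀ e ∈ E, e.2 ≠ w.length := by
  intro e he heq
  simpa [heq] using H.snd e he

theorem append_false_insert_iff (hS : w.length ∉ S) :
    IsOpenContraction (w ++ [false]) E (insert w.length S) ↔ IsOpenContraction w E S := by
  constructor <;> intro H
  · exact (append_singleton_iff H.snd_ne_length_of_append_false hS).1
      (H.mono subset_rfl (subset_insert _ _))
  · have H' := H.append_singleton false
    refine { H' with isOpen := ?_, uncovered := ?_ }
    · exact (forall_mem_insert ..).2 ⟨by simp, H'.isOpen⟩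
    · exact (forall_mem_insert ..).2 ⟨fun e he => .inr (H.snd_lt_length he), H.uncovered⟩

theorem length_notMem_of_append_true (H : IsOpenContraction (w ++ [true]) E S) :
    w.length ∉ S := by
  intro hs
  simpa using H.isOpen _ hs

theorem fst_ne_snd (H : IsOpenContraction w E S) {e f : ℕ × ℕ} (he : e ∈ E) (hf : f ∈ E) :
    e.1 ≠ f.2 := by
  intro h
  simpa [h, H.snd f hf] using H.fst e he

theorem lt_of_append_true_insert {s : ℕ}
    (H : IsOpenContraction (w ++ [true]) (insert (s, w.length) E) S) :
    ∀ t ∈ S, t < s := by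
  intro t ht
  have hlen := H.lt_length ht
  have hne : t ≠ w.length := ne_of_mem_of_not_mem ht H.length_notMem_of_append_true
  rw [List.length_append, List.length_singleton] at hlen
  exact (H.uncovered t ht _ (mem_insert_self _ _)).resolve_right (by dsimp only; omega)

theorem of_append_true_insert {s : ℕ} (hE : ∀ e ∈ E, e.2 ≠ w.length)
    (H : IsOpenContraction (w ++ [true]) (insert (s, w.length) E) S) :
    IsOpenContraction w E (insert s S) := by
  have hnew : (s, w.length) ∈ insert (s, w.length) E := mem_insert_self _ _
  have hold {e : ℕ × ℕ} (he : e ∈ E) : e ∈ insert (s, w.length) E := mem_insert_of_mem he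
  have H' : IsOpenContraction w E S :=
    (append_singleton_iff hE H.length_notMem_of_append_true).1
      (H.mono (subset_insert _ _) subset_rfl)
  refine { H' with isOpen := ?_, uncovered := ?_ }
  · refine (forall_mem_insert ..).2 ⟨?_, H'.isOpen⟩
    exact (getElem?_append_singleton_eq_some_iff.1 (H.fst _ hnew)).resolve_right (by simp)
  · refine (forall_mem_insert ..).2 ⟨fun e he => ?_, H'.uncovered⟩
    -- An edge of `E` over `s` would cross the edge from `s` to the new letter.
    have hcross := H.noncrossing e (hold he) _ hnew
    have hfst := (H.disjoint e (hold he) _ hnew fun h => hE e he (h ▸ rfl)).1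
    have hsnd := H.fst_ne_snd hnew (hold he)
    have hlen := H'.snd_lt_length he
    dsimp only at hcross hfst hsnd
    omega

theorem append_true_insert {s : ℕ} (hs : ∀ t ∈ S, t < s) (H : IsOpenContraction w E (insert s S)) :
    IsOpenContraction (w ++ [true]) (insert (s, w.length) E) S := by
  have hsmem : s ∈ insert s S := mem_insert_self _ _
  have hlen : ∀ e ∈ E, e.2 < w.length := fun _ => H.snd_lt_length
  have hcover := H.uncovered s hsmem
  have hne : ∀ e ∈ E, e.1 ≠ s ∧ e.2 ≠ w.length := fun e he =>
    ⟨fun h => (hcover e he).elim h.not_gt (h ▸ H.lt e he).not_gt, (hlen e he).ne⟩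
  have H' := H.append_singleton true
  constructor
  · exact (forall_mem_insert ..).2 ⟨H.lt_length hsmem, H.lt⟩
  · exact (forall_mem_insert ..).2 ⟨H'.isOpen s hsmem, H'.fst⟩
  · exact (forall_mem_insert ..).2 ⟨by simp, H'.snd⟩
  · exact (forall_mem_insert ..).2
      ⟨(forall_mem_insert ..).2 ⟨fun h => (h rfl).elim,
          fun f hf _ => ⟨(hne f hf).1.symm, (hne f hf).2.symm⟩⟩,
        fun e he => (forall_mem_insert ..).2 ⟨fun _ => hne e he, H.disjoint e he⟩⟩
  · -- An edge of `E` that crosses the new edge covers `s`.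
    exact (forall_mem_insert ..).2
      ⟨(forall_mem_insert ..).2 ⟨fun h => h.1.false, fun f hf h => h.2.2.not_gt (hlen f hf)⟩,
        fun e he => (forall_mem_insert ..).2
          ⟨fun h => (hcover e he).elim h.1.not_gt h.2.1.not_gt, H.noncrossing e he⟩⟩
  · exact fun t ht => H'.isOpen t (mem_insert_of_mem ht)
  · exact fun t ht => (forall_mem_insert ..).2
      ⟨.inl (hs t ht), H.uncovered t (mem_insert_of_mem ht)⟩

end IsOpenContraction

theorem finite_openContractions (w : List Bool) (j h : ℕ) : (openContractions w j h).Finite := by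
  let R := range w.length
  refine Set.Finite.subset ((R ×ˢ R).powerset ×ˢ R.powerset).finite_toSet ?_
  rintro ⟨E, S⟩ ⟨H, -⟩
  simp only [mem_coe, mem_product, mem_powerset]
  exact ⟨fun e he => by simpa [R] using ⟨H.fst_lt_length he, H.snd_lt_length he⟩,
    fun s hs => by simpa [R] using H.lt_length hs⟩

theorem openContractions_append_false_zero (w : List Bool) (j : ℕ) :
    openContractions (w ++ [false]) j 0 = openContractions w j 0 := by
  ext ⟨E, S⟩
  simp only [openContractions, Set.mem_ofPred_eq, card_eq_zero]
  refine and_congr_left ?_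
  rintro ⟨-, rfl⟩
  exact ⟨fun H =>
      (IsOpenContraction.append_singleton_iff H.snd_ne_length_of_append_false (by simp)).1 H,
    fun H => H.append_singleton false⟩

theorem openContractions_append_false_succ (w : List Bool) (j h : ℕ) :
    openContractions (w ++ [false]) j (h + 1) =
      openContractions w j (h + 1) ∪ openNext w '' openContractions w j h := by
  ext ⟨E, S⟩
  constructor
  · rintro ⟨H, hj, hh⟩
    by_cases hw : w.length ∈ S
    · obtain ⟨S, hwS, rfl⟩ : ∃ S', w.length ∉ S' ∧ S = insert w.length S' :=
        ⟨S.erase w.length, S.notMem_erase _, (insert_erase hw).symm⟩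
      refine .inr ⟨(E, S), ⟨(IsOpenContraction.append_false_insert_iff hwS).1 H, hj, ?_⟩, rfl⟩
      simpa [hwS] using hh
    · exact .inl
        ⟨(IsOpenContraction.append_singleton_iff H.snd_ne_length_of_append_false hw).1 H, hj, hh⟩
  · rintro (⟨H, hj, hh⟩ | ⟨⟨E, S⟩, ⟨H, hj, hh⟩, heq⟩)
    · exact ⟨H.append_singleton false, hj, hh⟩
    · obtain ⟨rfl, rfl⟩ := Prod.mk.inj heq
      exact ⟨(IsOpenContraction.append_false_insert_iff H.length_notMem).2 H, hj,
        by simpa [H.length_notMem] using hh⟩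

theorem openContractions_append_true_zero (w : List Bool) (h : ℕ) :
    openContractions (w ++ [true]) 0 h = openContractions w 0 h := by
  ext ⟨E, S⟩
  constructor
  · rintro ⟨H, hj, hh⟩
    obtain rfl : E = ∅ := card_eq_zero.1 hj
    exact ⟨(IsOpenContraction.append_singleton_iff (by simp) H.length_notMem_of_append_true).1 H,
      hj, hh⟩
  · rintro ⟨H, hj, hh⟩
    exact ⟨H.append_singleton true, hj, hh⟩

theorem openContractions_append_true_succ (w : List Bool) (j h : ℕ) :
    openContractions (w ++ [true]) (j + 1) h =
      openContractions w (j + 1) h ∪ closeLast w '' openContractions w j (h + 1) := by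
  ext ⟨E, S⟩
  constructor
  · rintro ⟨H, hj, hh⟩
    by_cases hw : ∃ e ∈ E, e.2 = w.length
    · obtain ⟨⟨s, _⟩, he, rfl⟩ := hw
      obtain ⟨E, heE, rfl⟩ : ∃ E', (s, w.length) ∉ E' ∧ E = insert (s, w.length) E' :=
        ⟨E.erase _, E.notMem_erase _, (insert_erase he).symm⟩
      have hold : ∀ e ∈ E, e.2 ≠ w.length := fun e he' =>
        (H.disjoint e (mem_insert_of_mem he') _ he (ne_of_mem_of_not_mem he' heE)).2
      have hlt := H.lt_of_append_true_insert
      have hsS : s ∉ S := fun hs => (hlt s hs).false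
      have hsup : (insert s S).sup id = s := by
        simpa using fun t ht => (hlt t ht).le
      refine .inr ⟨(E, insert s S), ⟨.of_append_true_insert hold H, ?_, ?_⟩, ?_⟩
      · simpa [heE] using hj
      · simpa [hsS] using hh
      · simp [closeLast, hsup, hsS]
    · push Not at hw
      exact .inl ⟨(IsOpenContraction.append_singleton_iff hw H.length_notMem_of_append_true).1 H,
        hj, hh⟩
  · rintro (⟨H, hj, hh⟩ | ⟨⟨E, S⟩, ⟨H, hj, hh⟩, heq⟩)
    · exact ⟨H.append_singleton true, hj, hh⟩
    · obtain ⟨rfl, rfl⟩ := Prod.mk.inj heq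
      dsimp only at H hj hh ⊢
      have hmem : S.sup id ∈ S := sup_id_mem (card_pos.1 (by omega))
      have hnew : (S.sup id, w.length) ∉ E := fun he => (H.snd_lt_length he).false
      refine ⟨.append_true_insert ?_ ((insert_erase hmem).symm ▸ H), ?_, ?_⟩
      · intro t ht
        exact (le_sup (f := id) (mem_of_mem_erase ht)).lt_of_ne
          (ne_of_mem_erase ht)
      · simp [hnew, hj]
      · simp [hmem, hh]

theorem openCount_nil (j h : ℕ) : openCount [] j h = if j = 0 ∧ h = 0 then 1 else 0 := by
  have hempty : openContractions [] j h = {x | x = (∅, ∅) ∧ j = 0 ∧ h = 0} := by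
    ext ⟨E, S⟩
    constructor
    · rintro ⟨H, rfl, rfl⟩
      have hE : E = ∅ := eq_empty_of_forall_notMem fun e he => by simpa using H.fst e he
      have hS : S = ∅ := eq_empty_of_forall_notMem fun s hs => by simpa using H.isOpen s hs
      simp [hE, hS]
    · rintro ⟨heq, rfl, rfl⟩
      obtain ⟨rfl, rfl⟩ := Prod.mk.inj heq
      exact ⟨by constructor <;> simp, rfl, rfl⟩
  rw [openCount, hempty]
  split_ifs with hjh <;> simp [hjh]

theorem openCount_append_false_zero (w : List Bool) (j : ℕ) :
    openCount (w ++ [false]) j 0 = openCount w j 0 := by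
  rw [openCount, openContractions_append_false_zero, openCount]

theorem openCount_append_false_succ (w : List Bool) (j h : ℕ) :
    openCount (w ++ [false]) j (h + 1) = openCount w j (h + 1) + openCount w j h := by
  have hinj : Set.InjOn (openNext w) (openContractions w j h) := by
    rintro ⟨E, S⟩ ⟨H, -⟩ ⟨E', S'⟩ ⟨H', -⟩ heq
    obtain ⟨rfl, hS⟩ := Prod.mk.inj heq
    dsimp only at H H' hS
    congr 1
    rw [← erase_insert H.length_notMem, hS, erase_insert H'.length_notMem]
  have hdisj : Disjoint (openContractions w j (h + 1)) (openNext w '' openContractions w j h) := by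
    refine Set.disjoint_right.2 ?_
    rintro _ ⟨x, -, rfl⟩ ⟨H, -⟩
    exact H.length_notMem (mem_insert_self _ _)
  rw [openCount, openContractions_append_false_succ, Set.ncard_union_eq hdisj
    (finite_openContractions ..) ((finite_openContractions ..).image _), hinj.ncard_image,
    openCount, openCount]

theorem openCount_append_true_zero (w : List Bool) (h : ℕ) :
    openCount (w ++ [true]) 0 h = openCount w 0 h := by
  rw [openCount, openContractions_append_true_zero, openCount]

theorem injOn_closeLast (w : List Bool) (j h : ℕ) :
    Set.InjOn (closeLast w) (openContractions w j (h + 1)) := by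
  rintro ⟨E, S⟩ ⟨H, -, hh⟩ ⟨E', S'⟩ ⟨H', -, hh'⟩ heq
  obtain ⟨hE, hS⟩ := Prod.mk.inj heq
  dsimp only at H hh H' hh' hE hS
  have hnew (s : ℕ) : (s, w.length) ∉ E := fun he => (H.snd_lt_length he).false
  have hnew' (s : ℕ) : (s, w.length) ∉ E' := fun he => (H'.snd_lt_length he).false
  have hsup : S.sup id = S'.sup id := by
    have hmem := hE ▸ mem_insert_self (S.sup id, w.length) E
    simpa [hnew'] using hmem
  have hmem : S.sup id ∈ S := sup_id_mem (card_pos.1 (by omega))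
  have hmem' : S'.sup id ∈ S' := sup_id_mem (card_pos.1 (by omega))
  congr 1
  · rw [← erase_insert (hnew (S.sup id)), hE, hsup, erase_insert (hnew' _)]
  · rw [← insert_erase hmem, hS, hsup, insert_erase hmem']

theorem openCount_append_true_succ (w : List Bool) (j h : ℕ) :
    openCount (w ++ [true]) (j + 1) h = openCount w (j + 1) h + openCount w j (h + 1) := by
  have hdisj : Disjoint (openContractions w (j + 1) h)
      (closeLast w '' openContractions w j (h + 1)) := by
    refine Set.disjoint_right.2 ?_
    rintro _ ⟨x, -, rfl⟩ ⟨H, -⟩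
    exact (H.snd_lt_length (mem_insert_self _ _)).false
  rw [openCount, openContractions_append_true_succ, Set.ncard_union_eq hdisj
    (finite_openContractions ..) ((finite_openContractions ..).image _),
    (injOn_closeLast w j h).ncard_image, openCount, openCount]

theorem openCount_append_replicate_true (w : List Bool) (s j h : ℕ) :
    openCount (w ++ List.replicate s true) j h =
      ∑ p ∈ antidiagonal j, s.choose p.1 * openCount w p.2 (h + p.1) := by
  induction s generalizing j h with
  | zero =>
    cases j with
    | zero => simp
    | succ j => simp [Nat.sum_antidiagonal_succ]
  | succ s ih =>
    rw [List.replicate_succ', ← List.append_assoc]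
    cases j with
    | zero => rw [openCount_append_true_zero, ih]; simp
    | succ j =>
      rw [openCount_append_true_succ, ih, ih, Nat.sum_antidiagonal_succ,
        Nat.sum_antidiagonal_succ]
      simp only [Nat.choose_succ_succ', add_mul, sum_add_distrib, Nat.choose_zero_right,
        add_assoc, add_comm 1]
      ring

/-- Edges of a word of length `N` as pairs of natural numbers, as in `IsOpenContraction`. -/
def edgeEmbedding (N : ℕ) : Fin N × Fin N ↪ ℕ × ℕ :=
  Fin.valEmbedding.prodMap Fin.valEmbedding

theorem edgeEmbedding_apply {N : ℕ} (e : Fin N × Fin N) :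
    edgeEmbedding N e = (e.1.val, e.2.val) := rfl

theorem isOpenContraction_map_iff {w : List Bool}
    {E : Finset (Fin w.length × Fin w.length)} :
    IsOpenContraction w (E.map (edgeEmbedding w.length)) ∅ ↔
      IsContraction w.get E ∧ IsNoncrossing E := by
  constructor
  · intro H
    have hmem {e : Fin w.length × Fin w.length} (he : e ∈ E) :
        (e.1.val, e.2.val) ∈ E.map (edgeEmbedding w.length) :=
      mem_map_of_mem _ he
    refine ⟨⟨fun e he => ⟨H.lt _ (hmem he), ?_, ?_⟩, fun e he f hf hne => ?_⟩,
      fun e he f hf => ?_⟩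
    · simpa using H.fst _ (hmem he)
    · simpa using H.snd _ (hmem he)
    · have hdisj := H.disjoint _ (hmem he) _ (hmem hf)
        (by simpa [Fin.val_inj, Prod.ext_iff] using hne)
      have hfst := H.fst_ne_snd (hmem he) (hmem hf)
      have hsnd := H.fst_ne_snd (hmem hf) (hmem he)
      simp only [ne_eq, Fin.val_inj] at hdisj hfst hsnd
      exact ⟨hdisj.1, hfst, Ne.symm hsnd, hdisj.2⟩
    · rintro (hc | hc)
      · exact H.noncrossing _ (hmem he) _ (hmem hf) hc
      · exact H.noncrossing _ (hmem hf) _ (hmem he) hc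
  · rintro ⟨⟨hedge, hdisj⟩, hnc⟩
    constructor <;> simp only [forall_mem_map, edgeEmbedding_apply, notMem_empty,
      false_imp_iff, implies_true]
    · exact fun e he => (hedge e he).1
    · exact fun e he => by simpa using (hedge e he).2.1
    · exact fun e he => by simpa using (hedge e he).2.2
    · intro e he f hf hne
      have h := hdisj e he f hf fun heq => hne (heq ▸ rfl)
      simpa [Fin.val_inj] using And.intro h.1 h.2.2.2
    · exact fun e he f hf hc => hnc e he f hf (.inl hc)

theorem openContractions_zero_eq_image (w : List Bool) (j : ℕ) :
    openContractions w j 0 =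
      (fun E => (E.map (edgeEmbedding w.length), ∅)) ''
        {E : Finset (Fin w.length × Fin w.length) |
          IsContraction w.get E ∧ IsNoncrossing E ∧ E.card = j} := by
  ext ⟨E, S⟩
  constructor
  · rintro ⟨H, hj, hS⟩
    obtain rfl : S = ∅ := card_eq_zero.1 hS
    obtain ⟨E, -, rfl⟩ : ∃ E' ⊆ univ, E = E'.map (edgeEmbedding w.length) :=
      subset_map_iff.1 fun e he => mem_map.2
        ⟨(⟨e.1, H.fst_lt_length he⟩, ⟨e.2, H.snd_lt_length he⟩), mem_univ _, rfl⟩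
    obtain ⟨hc, hnc⟩ := isOpenContraction_map_iff.1 H
    exact ⟨E, ⟨hc, hnc, by simpa using hj⟩, rfl⟩
  · rintro ⟨E, ⟨hc, hnc, rfl⟩, heq⟩
    obtain ⟨rfl, rfl⟩ := Prod.mk.inj heq
    exact ⟨isOpenContraction_map_iff.2 ⟨hc, hnc⟩, card_map _, rfl⟩

theorem ncCount_get_eq_openCount (w : List Bool) (j : ℕ) : ncCount w.get j = openCount w j 0 := by
  have hinj : Function.Injective fun E : Finset (Fin w.length × Fin w.length) =>
      (E.map (edgeEmbedding w.length), (∅ : Finset ℕ)) := fun _ _ h =>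
    map_injective _ (Prod.mk.inj h).1
  rw [ncCount, openCount, openContractions_zero_eq_image, Set.ncard_image_of_injective _ hinj,
    ← Nat.card_coe_set_eq]
  rfl

end OpenContraction

section Choices

open Finset

/-- The choices for the blocks of `(a + (a†)^s)^n` in which exactly `b` blocks are `(a†)^s`. -/
def choices (n b : ℕ) : Finset (Fin n → Bool) :=
  {c | #{k | c k = true} = b}

theorem mem_choices {n b : ℕ} {c : Fin n → Bool} : c ∈ choices n b ↔ #{k | c k = true} = b := by
  rw [choices, mem_filter_univ]

theorem card_filter_snoc_eq_true {n : ℕ} (c : Fin n → Bool) (x : Bool) :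
    #{k | (Fin.snoc c x : Fin (n + 1) → Bool) k = true} = #{k | c k = true} + x.toNat := by
  simp only [card_filter, Fin.sum_univ_castSucc, Fin.snoc_castSucc, Fin.snoc_last]
  cases x <;> rfl

theorem sum_fin_succ_bool {M : Type*} [AddCommMonoid M] {n : ℕ} (f : (Fin (n + 1) → Bool) → M) :
    ∑ c, f c = ∑ c : Fin n → Bool, f (Fin.snoc c false) +
      ∑ c : Fin n → Bool, f (Fin.snoc c true) := by
  rw [← (Fin.snocEquiv fun _ => Bool).sum_comp, Fintype.sum_prod_type, Fintype.sum_bool, add_comm]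
  rfl

theorem sum_choices_succ_zero {M : Type*} [AddCommMonoid M] {n : ℕ}
    (f : (Fin (n + 1) → Bool) → M) :
    ∑ c ∈ choices (n + 1) 0, f c = ∑ c ∈ choices n 0, f (Fin.snoc c false) := by
  simp only [choices, sum_filter, sum_fin_succ_bool, card_filter_snoc_eq_true, Bool.toNat_false,
    Bool.toNat_true, add_zero, Nat.add_one_ne_zero, if_false, sum_const_zero]

theorem sum_choices_succ_succ {M : Type*} [AddCommMonoid M] {n : ℕ} (b : ℕ)
    (f : (Fin (n + 1) → Bool) → M) :
    ∑ c ∈ choices (n + 1) (b + 1), f c =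
      ∑ c ∈ choices n (b + 1), f (Fin.snoc c false) + ∑ c ∈ choices n b, f (Fin.snoc c true) := by
  simp only [choices, sum_filter, sum_fin_succ_bool, card_filter_snoc_eq_true, Bool.toNat_false,
    Bool.toNat_true, add_zero, Nat.add_right_cancel_iff]

theorem wordChoiceAS_snoc (s : ℕ) {n : ℕ} (c : Fin n → Bool) (x : Bool) :
    wordChoiceAS s (Fin.snoc c x : Fin (n + 1) → Bool) =
      wordChoiceAS s c ++ if x then List.replicate s true else [false] := by
  rw [wordChoiceAS, wordChoiceAS, List.ofFn_succ', List.concat_eq_append]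
  simp

/-- The number of pairs of a choice for `(a + (a†)^s)^n` with `b` blocks `(a†)^s` and an open
contraction of its word with `j` edges and `h` open letters. -/
noncomputable def choiceOpenCount (s n b j h : ℕ) : ℕ :=
  ∑ c ∈ choices n b, openCount (wordChoiceAS s c) j h

theorem choiceOpenCount_zero (s b j h : ℕ) :
    choiceOpenCount s 0 b j h = if b = 0 ∧ j = 0 ∧ h = 0 then 1 else 0 := by
  cases b <;> simp [choiceOpenCount, choices, wordChoiceAS, openCount_nil]

theorem sum_choices_openCount_append_replicate (s n b j h : ℕ) :
    ∑ c ∈ choices n b, openCount (wordChoiceAS s c ++ List.replicate s true) j h =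
      ∑ p ∈ antidiagonal j, s.choose p.1 * choiceOpenCount s n b p.2 (h + p.1) := by
  simp only [openCount_append_replicate_true, choiceOpenCount, mul_sum]
  exact sum_comm

theorem pairCountAS_eq_choiceOpenCount {n i : ℕ} (s j : ℕ) (hin : i ≤ n) :
    pairCountAS s n j i = choiceOpenCount s n (n - i) j 0 := by
  have hfalse (c : Fin n → Bool) : #{k | c k = false} = i ↔ #{k | c k = true} = n - i := by
    have h := card_filter_add_card_filter_not (s := univ) fun k => c k = true
    simp only [Bool.not_eq_true, card_univ, Fintype.card_fin] at h
    omega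
  let e : {p : Σ c : Fin n → Bool,
      Finset (Fin (wordChoiceAS s c).length × Fin (wordChoiceAS s c).length) //
        #{k | p.1 k = false} = i ∧ IsContraction (wordChoiceAS s p.1).get p.2 ∧
          IsNoncrossing p.2 ∧ #p.2 = j} ≃
      Σ c : choices n (n - i),
        {E : Finset (Fin (wordChoiceAS s c.1).length × Fin (wordChoiceAS s c.1).length) //
          IsContraction (wordChoiceAS s c.1).get E ∧ IsNoncrossing E ∧ #E = j} :=
    { toFun p := ⟨⟨p.1.1, mem_choices.2 ((hfalse _).1 p.2.1)⟩, p.1.2, p.2.2⟩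
      invFun p := ⟨⟨p.1.1, p.2.1⟩, (hfalse _).2 (mem_choices.1 p.1.2), p.2.2⟩
      left_inv _ := rfl
      right_inv _ := rfl }
  rw [pairCountAS, Nat.card_congr e, Nat.card_sigma, choiceOpenCount,
    ← (choices n (n - i)).sum_coe_sort]
  exact sum_congr rfl fun c _ => ncCount_get_eq_openCount ..

end Choices

section Ballot

open Finset

-- The term subtracted from the right-hand side is moved to the left.
theorem sum_openCount_append_false_of_ballot {s n b j : ℕ}
    (hn : ∀ h, (n + 1) * choiceOpenCount s n b j h =
      (h + 1) * trinomial (n + 1) b (j + h + 1) * (s * b).choose j) (h : ℕ) :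
    (n + 2) * ((n + 1) * ∑ c ∈ choices n b, openCount (wordChoiceAS s c ++ [false]) j h) +
        ((h + 1) * b + (j + h + 1)) * trinomial (n + 2) b (j + h + 1) * (s * b).choose j =
      (h + 1) * (n + 2) * trinomial (n + 2) b (j + h + 1) * (s * b).choose j := by
  have hadd := add_one_mul_trinomial_add (n + 1) b (j + h + 1)
  cases h with
  | zero =>
    simp only [openCount_append_false_zero]
    have h0 := hn 0
    rw [choiceOpenCount] at h0
    rw [h0]
    linear_combination (s * b).choose j * hadd
  | succ h =>
    have h0 := hn h
    have h1 := hn (h + 1)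
    have hright := add_one_mul_trinomial_right (n + 1) b (j + h + 1)
    simp only [openCount_append_false_succ, sum_add_distrib, mul_add]
    rw [choiceOpenCount] at h0 h1
    rw [h0, h1]
    simp only [← add_assoc] at hadd ⊢
    linear_combination (s * b).choose j * ((h + 2) * hadd + (h + 1) * hright)

theorem sum_openCount_append_replicate_of_ballot {s n b : ℕ}
    (hn : ∀ j h, (n + 1) * choiceOpenCount s n b j h =
      (h + 1) * trinomial (n + 1) b (j + h + 1) * (s * b).choose j) (j h : ℕ) :
    (n + 2) * ((n + 1) *
        ∑ c ∈ choices n b, openCount (wordChoiceAS s c ++ List.replicate s true) j h) =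
      ((b + 1) * (h + 1) + j) * trinomial (n + 2) (b + 1) (j + h + 1) *
        (s * (b + 1)).choose j := by
  have hterm : ∀ p ∈ antidiagonal j,
      (n + 1) * (s.choose p.1 * choiceOpenCount s n b p.2 (h + p.1)) =
        trinomial (n + 1) b (j + h + 1) *
          (s.choose p.1 * ((h + p.1 + 1) * (s * b).choose p.2)) := fun p hp => by
    rw [mul_left_comm, hn, show p.2 + (h + p.1) + 1 = j + h + 1 by
      rw [← mem_antidiagonal.1 hp]; ring]
    ring
  have hleft := add_one_mul_trinomial_left (n + 1) b (j + h + 1)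
  have hconv := add_one_mul_sum_weighted_choose_mul_choose s b j h
  rw [sum_choices_openCount_append_replicate, mul_sum, sum_congr rfl hterm, ← mul_sum]
  linear_combination
    (∑ p ∈ antidiagonal j, s.choose p.1 * ((h + p.1 + 1) * (s * b).choose p.2)) * hleft +
      trinomial (n + 2) (b + 1) (j + h + 1) * hconv

theorem add_one_mul_choiceOpenCount (s n b j h : ℕ) :
    (n + 1) * choiceOpenCount s n b j h =
      (h + 1) * trinomial (n + 1) b (j + h + 1) * (s * b).choose j := by
  induction n generalizing b j h with
  | zero =>
    rw [choiceOpenCount_zero]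
    split_ifs with hzero
    · obtain ⟨rfl, rfl, rfl⟩ := hzero
      simp [trinomial]
    · rw [trinomial, Nat.choose_eq_zero_of_lt (by omega)]
      simp
  | succ n ih =>
    have hfalse := sum_openCount_append_false_of_ballot (ih b j) h
    refine Nat.eq_of_mul_eq_mul_left n.add_one_pos ?_
    cases b with
    | zero =>
      rw [choiceOpenCount, sum_choices_succ_zero]
      simp only [wordChoiceAS_snoc, Bool.false_eq_true, if_false]
      have hj : j * (s * 0).choose j = 0 := by cases j <;> simp
      linear_combination hfalse + trinomial (n + 2) 0 (j + h + 1) * hj.symm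
    | succ b =>
      have htrue := sum_openCount_append_replicate_of_ballot (ih b) j h
      rw [choiceOpenCount, sum_choices_succ_succ]
      simp only [wordChoiceAS_snoc, Bool.false_eq_true, if_false, if_true]
      linear_combination hfalse + htrue

end Ballot

theorem stmt13_general (s n i j : ℕ) (hin : i ≤ n) :
    (n + 1) * pairCountAS s n j i =
      (n + 1).choose (j + 1) * (n - j).choose (n - i) * (s * (n - i)).choose j := by
  rw [pairCountAS_eq_choiceOpenCount s j hin, add_one_mul_choiceOpenCount, zero_add, one_mul,
    add_zero, trinomial_eq_choose_mul_choose_sub, Nat.add_sub_add_right]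

theorem stmt13 (n i j : ℕ) (hji : j ≤ i) (hin : i ≤ n) :
    (n + 1) * pairCountAS 2 n j i
      = Nat.choose (n + 1) (j + 1) * Nat.choose (n - j) (n - i)
          * Nat.choose (2 * (n - i)) j :=
  stmt13_general 2 n i j hin
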